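/- Let k, m ∈ ℕ and let λ_1, …, λ_m be positive reals. Then lim_{n→∞} χ(ℝ^n_∞, B_k(λ_1) × ⋯ × B_k(λ_m))^{1/n} = (k+1)/k; that is, χ(ℝ^n_∞, B_k(λ_1) × ⋯ × B_k(λ_m)) = ((k+1)/k + o(1))^n. -/

import Mathlib

open Set Filter

/-- The set `A` (in the metric space `β`) contains an isometric copy of the
metric (sub)space `M` (a subset of the metric space `α`). -/
def HasCopy {α β : Type*} [MetricSpace α] [MetricSpace β] (M : Set α) (A : Set β) : Prop :=
  ∃ f : α → β, (∀ x ∈ M, ∀ y ∈ M, dist (f x) (f y) = dist x y) ∧ f '' M ⊆ A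

/-- The chromatic number of `ℝ^n` with the max-norm metric and forbidden subspace `M`. -/
noncomputable def chrom {α : Type*} [MetricSpace α] (M : Set α) (n : ℕ) : ℕ :=
  sInf {N : ℕ | ∃ c : (Fin n → ℝ) → Fin N, ∀ i : Fin N, ¬ HasCopy M {x | c x = i}}

/-- The Cartesian product `B_k(λ₁) × ⋯ × B_k(λ_m)` of arithmetic progressions
`B_k(λ) = {0, λ, …, kλ}`, realised inside `ℝ^m` with the max metric. -/
def gridAP (m k : ℕ) (lam : Fin m → ℝ) : Set (Fin m → ℝ) :=
  {x | ∀ i, ∃ j : ℕ, j ≤ k ∧ x i = (j : ℝ) * lam i}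

/-!
Write `r = k / (k + 1)`; up to polynomial factors the chromatic number is `r⁻¹ ^ n`.

Upper bound: a single baton `B_k(l)` suffices. Cut `ℝ ^ n` into cubes of side `l` and label them by
`(ℤ / (k + 1)) ^ n`. In some coordinate a copy of the baton visits all residues, so it cannot
consist of points whose labels all differ from a fixed `t` in every coordinate. The labels avoiding
`t` have density `r ^ n`, and about `n * r⁻¹ ^ n` random choices of `t` cover all labels.

Lower bound: finitely many letters on the line are weighted so that the density of a set of words is
an average over translates of each `B_k(λ_i)`. As in the Sauer–Shelah lemma, induction on the
dimension and on the number of factors shows that a set free of copies of the grid has density at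
most `r ^ n * (n + 1) ^ m`. The factors are added in decreasing order of `λ_i`: a slice at `t` can
then be merged with one at `t + λ_i` without affecting the distances in a copy of the grid, all of
which are at least `λ_i`.
-/

open scoped BigOperators Finset

section Copies

variable {α β γ κ : Type*} [MetricSpace α] [MetricSpace β] [MetricSpace γ] {M : Set α}

/-- The baton `B_k(l) = {0, l, …, kl} ⊂ ℝ`. -/
def baton (k : ℕ) (l : ℝ) : Set ℝ :=
  {x | ∃ j : ℕ, j ≤ k ∧ x = (j : ℝ) * l}

/-- A colouring is proper for the forbidden metric space `M` if no colour class contains an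
isometric copy of `M`. -/
def IsProper (M : Set α) (c : β → κ) : Prop :=
  ∀ i, ¬ HasCopy M {x | c x = i}

theorem HasCopy.mono {A A' : Set β} (hA : A ⊆ A') (h : HasCopy M A) : HasCopy M A' := by
  obtain ⟨f, hf, hfA⟩ := h
  exact ⟨f, hf, hfA.trans hA⟩

theorem HasCopy.trans {A : Set β} {B : Set γ} (hMA : HasCopy M A) (hAB : HasCopy A B) :
    HasCopy M B := by
  obtain ⟨f, hf, hfA⟩ := hMA
  obtain ⟨g, hg, hgB⟩ := hAB
  have hfM : ∀ x ∈ M, f x ∈ A := fun x hx => hfA (mem_image_of_mem f hx)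
  refine ⟨g ∘ f, fun x hx y hy => ?_, ?_⟩
  · rw [Function.comp_apply, Function.comp_apply, hg _ (hfM x hx) _ (hfM y hy), hf x hx y hy]
  · rintro _ ⟨x, hx, rfl⟩
    exact hgB (mem_image_of_mem g (hfM x hx))

theorem HasCopy.of_subsingleton (hM : M.Subsingleton) {A : Set β} (hA : A.Nonempty) :
    HasCopy M A := by
  obtain ⟨a, ha⟩ := hA
  refine ⟨fun _ => a, fun x hx y hy => by rw [hM hx hy, dist_self, dist_self], ?_⟩
  rintro _ ⟨x, -, rfl⟩
  exact ha

theorem IsProper.of_hasCopy {M' : Set γ} {c : β → κ} (hc : IsProper M c) (hM : HasCopy M M') :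
    IsProper M' c :=
  fun i hi => hc i (hM.trans hi)

theorem chrom_le_of_isProper {n N : ℕ} {c : (Fin n → ℝ) → Fin N} (hc : IsProper M c) :
    chrom M n ≤ N :=
  Nat.sInf_le ⟨c, hc⟩

theorem IsProper.exists_isProper_chrom {n N : ℕ} {c : (Fin n → ℝ) → Fin N} (hc : IsProper M c) :
    ∃ c' : (Fin n → ℝ) → Fin (chrom M n), IsProper M c' := by
  have hne : {N : ℕ | ∃ c : (Fin n → ℝ) → Fin N, IsProper M c}.Nonempty := ⟨N, c, hc⟩
  exact Nat.sInf_mem hne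

theorem pairwise_le_dist_baton (k : ℕ) (l : ℝ) :
    (baton k l).Pairwise fun x y => l ≤ dist x y := by
  rintro _ ⟨i, -, rfl⟩ _ ⟨j, -, rfl⟩ hij
  have hij' : (i : ℤ) - j ≠ 0 := sub_ne_zero.2 fun h => hij (by rw [Nat.cast_injective h])
  have hone : (1 : ℝ) ≤ |(i : ℝ) - j| := by exact_mod_cast Int.one_le_abs hij'
  rw [Real.dist_eq, ← sub_mul, abs_mul]
  exact (le_abs_self l).trans (le_mul_of_one_le_left (abs_nonneg l) hone)

theorem pairwise_le_dist_prod {S : Set β} {l : ℝ} (hS : S.Pairwise fun x y => l ≤ dist x y)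
    (hM : M.Pairwise fun x y => l ≤ dist x y) :
    (S ×ˢ M).Pairwise fun x y => l ≤ dist x y := by
  rintro ⟨s, x⟩ ⟨hs, hx⟩ ⟨t, y⟩ ⟨ht, hy⟩ hne
  rw [Prod.dist_eq, le_max_iff]
  by_cases hst : s = t
  · exact .inr (hM hx hy fun hxy => hne (Prod.ext hst hxy))
  · exact .inl (hS hs ht hst)

theorem hasCopy_baton_gridAP {m : ℕ} (k : ℕ) (lam : Fin m → ℝ) (i : Fin m) :
    HasCopy (baton k (lam i)) (gridAP m k lam) := by
  have hsingle := Isometry.single (E := fun _ : Fin m => ℝ) i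
  refine ⟨Pi.single (M := fun _ => ℝ) i, fun x _ y _ => hsingle.dist_eq x y, ?_⟩
  rintro _ ⟨_, ⟨j, hj, rfl⟩, rfl⟩ b
  obtain rfl | hb := eq_or_ne b i
  · exact ⟨j, hj, Pi.single_eq_same ..⟩
  · exact ⟨0, k.zero_le, by simp [hb]⟩

end Copies

section Covering

/-- `N` independent uniform choices of `b` all miss a given `a` with probability at most
`(1 - p) ^ N ≤ exp (-N p)`, so by the union bound some choice misses no `a`. -/
theorem exists_forall_exists_of_log_card_lt {α β : Type*} [Fintype α] [Fintype β] [Nonempty β]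
    (r : α → β → Prop) [DecidableRel r] {p : ℝ} {N : ℕ}
    (hp : ∀ a, p * Fintype.card β ≤ #{b | r a b}) (hN : Real.log (Fintype.card α) < N * p) :
    ∃ t : Fin N → β, ∀ a, ∃ s, r a (t s) := by
  classical
  by_contra! hmiss
  obtain ⟨a₀, -⟩ := hmiss fun _ => Classical.arbitrary β
  have : Nonempty α := ⟨a₀⟩
  have hunion : Fintype.card β ^ N ≤ ∑ a, #{b | ¬ r a b} ^ N := by
    calc Fintype.card β ^ N
        = #(Finset.univ : Finset (Fin N → β)) := by simp
      _ ≤ #(Finset.univ.biUnion fun a : α => Fintype.piFinset fun _ : Fin N => {b | ¬ r a b}) :=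
          Finset.card_le_card fun t _ => by simpa using hmiss t
      _ ≤ ∑ a : α, #(Fintype.piFinset fun _ : Fin N => ({b | ¬ r a b} : Finset β)) :=
          Finset.card_biUnion_le
      _ = ∑ a, #{b | ¬ r a b} ^ N := by simp
  have hcompl : ∀ a, (#{b | ¬ r a b} : ℝ) ≤ Fintype.card β * Real.exp (-p) := by
    intro a
    have hsplit : (#{b | r a b} : ℝ) + #{b | ¬ r a b} = Fintype.card β := by
      exact_mod_cast Finset.card_filter_add_card_filter_not (s := Finset.univ) (r a)
    calc (#{b | ¬ r a b} : ℝ) ≤ Fintype.card β * (1 - p) := by linarith [hp a]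
      _ ≤ Fintype.card β * Real.exp (-p) := by gcongr; exact Real.one_sub_le_exp_neg p
  have hsmall : (Fintype.card α : ℝ) * Real.exp (-p) ^ N < 1 := by
    rw [← Real.exp_log (by positivity : (0 : ℝ) < Fintype.card α), ← Real.exp_nat_mul,
      ← Real.exp_add, Real.exp_lt_one_iff]
    linarith
  refine lt_irrefl ((Fintype.card β : ℝ) ^ N) ?_
  calc (Fintype.card β : ℝ) ^ N ≤ ∑ a, (#{b | ¬ r a b} : ℝ) ^ N := by exact_mod_cast hunion
    _ ≤ ∑ _a : α, (Fintype.card β * Real.exp (-p)) ^ N := by gcongr with a; exact hcompl a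
    _ = Fintype.card α * Real.exp (-p) ^ N * Fintype.card β ^ N := by
        rw [Finset.sum_const, Finset.card_univ, nsmul_eq_mul, mul_pow]
        ring
    _ < Fintype.card β ^ N := mul_lt_of_lt_one_left (by positivity) hsmall

variable {A ι : Type*} [Fintype A] [Fintype ι]

theorem card_filter_forall_ne [DecidableEq A] [DecidableEq ι] (z : ι → A) :
    #{t : ι → A | ∀ c, z c ≠ t c} = (Fintype.card A - 1) ^ Fintype.card ι := by
  have hpi : ({t | ∀ c, z c ≠ t c} : Finset (ι → A))
      = Fintype.piFinset fun c => Finset.univ.erase (z c) := by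
    ext t
    simp [eq_comm]
  simp [hpi, Finset.card_erase_of_mem]

theorem exists_avoiding_family {k : ℕ} (hk : 0 < k) (hA : Fintype.card A = k + 1) :
    ∃ N : ℕ, (N : ℝ) ≤ (((k : ℝ) + 1) / k) ^ Fintype.card ι *
        (Real.log (k + 1) * Fintype.card ι + 1) ∧
      ∃ t : Fin N → ι → A, ∀ z : ι → A, ∃ s, ∀ c, z c ≠ t s c := by
  classical
  have : Nonempty A := Fintype.card_pos_iff.1 (by omega)
  have hk' : (0 : ℝ) < k := mod_cast hk
  set d := Fintype.card ι
  set C : ℝ := (((k : ℝ) + 1) / k) ^ d with hC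
  have hC1 : 1 ≤ C := one_le_pow₀ ((one_le_div hk').2 (by linarith))
  have hlog : 0 ≤ Real.log ((k : ℝ) + 1) := Real.log_nonneg (by linarith)
  refine ⟨⌊C * (Real.log (k + 1) * d)⌋₊ + 1, ?_, ?_⟩
  · have hfloor := Nat.floor_le (a := C * (Real.log (k + 1) * d)) (by positivity)
    push_cast
    linarith
  · refine exists_forall_exists_of_log_card_lt (fun z t : ι → A => ∀ c, z c ≠ t c) (p := C⁻¹)
      (fun z => ?_) ?_
    · rw [card_filter_forall_ne, Fintype.card_fun, hA, hC, ← inv_pow, inv_div, div_pow]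
      push_cast [Nat.add_sub_cancel]
      rw [div_mul_cancel₀ _ (by positivity)]
    · rw [Fintype.card_fun, hA, ← div_eq_mul_inv, lt_div_iff₀ (by positivity)]
      push_cast
      rw [Real.log_pow, mul_comm, mul_comm (d : ℝ)]
      exact Nat.lt_floor_add_one _

end Covering

section Upper

variable {ι κ : Type*} [Fintype ι] {k : ℕ} {l : ℝ}

/-- The coordinate that realises the distance between the endpoints is forced by the triangle
inequality to move at full speed in one direction. -/
theorem exists_coord_eq_add_mul (hk : 0 < k) (hl : 0 < l) {y : ℕ → ι → ℝ}
    (hy : ∀ i ≤ k, ∀ j ≤ k, dist (y i) (y j) = |(i : ℝ) - j| * l) :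
    ∃ c, ∃ ε : ℤˣ, ∀ j ≤ k, y j c = y 0 c + (((ε : ℤ) * j : ℤ) : ℝ) * l := by
  obtain ⟨c, hc⟩ : ∃ c, k * l ≤ |y k c - y 0 c| := by
    by_contra! hlt
    have hdist := (dist_pi_lt_iff (f := y k) (g := y 0) (r := k * l) (by positivity)).2 hlt
    rw [hy k le_rfl 0 k.zero_le, Nat.cast_zero, sub_zero, Nat.abs_cast] at hdist
    exact hdist.false
  have hstart : ∀ j ≤ k, |y j c - y 0 c| ≤ j * l := fun j hj => by
    simpa [hy j hj 0 k.zero_le, Real.dist_eq] using dist_le_pi_dist (y j) (y 0) c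
  have hend : ∀ j ≤ k, |y k c - y j c| ≤ (k - j) * l := fun j hj => by
    have hjk : (0 : ℝ) ≤ k - j := sub_nonneg.2 (mod_cast hj)
    simpa [hy k le_rfl j hj, Real.dist_eq, abs_of_nonneg hjk] using dist_le_pi_dist (y k) (y j) c
  refine ⟨c, ?_⟩
  rcases le_abs'.1 hc with hneg | hpos
  · refine ⟨-1, fun j hj => ?_⟩
    have := abs_le.1 (hstart j hj)
    have := abs_le.1 (hend j hj)
    push_cast
    linarith
  · refine ⟨1, fun j hj => ?_⟩
    have := abs_le.1 (hstart j hj)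
    have := abs_le.1 (hend j hj)
    push_cast
    linarith

theorem exists_floor_div_eq_zmod (hl : l ≠ 0) (a : ℝ) (ε : ℤˣ) (z : ZMod (k + 1)) :
    ∃ j ≤ k, ((⌊(a + (((ε : ℤ) * j : ℤ) : ℝ) * l) / l⌋ : ℤ) : ZMod (k + 1)) = z := by
  set w : ZMod (k + 1) := ((ε : ℤ) : ZMod (k + 1)) * (z - (⌊a / l⌋ : ℤ)) with hw
  refine ⟨w.val, Nat.lt_succ_iff.1 (ZMod.val_lt w), ?_⟩
  have hε : ((ε : ℤ) : ZMod (k + 1)) * ((ε : ℤ) : ZMod (k + 1)) = 1 := by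
    rw [← Int.cast_mul, ← Units.val_mul, Int.units_mul_self, Units.val_one, Int.cast_one]
  rw [add_div, mul_div_cancel_right₀ _ hl, Int.floor_add_intCast]
  push_cast
  rw [ZMod.natCast_zmod_val, hw, ← mul_assoc, hε]
  ring

/-- Colour a point by a translate that avoids the cell, modulo `k + 1`, containing the point:
along a baton some coordinate runs through all residues, including the avoided one. -/
theorem exists_isProper_baton (hk : 0 < k) (hl : 0 < l) {t : κ → ι → ZMod (k + 1)}
    (ht : ∀ z : ι → ZMod (k + 1), ∃ s, ∀ c, z c ≠ t s c) :
    ∃ c : (ι → ℝ) → κ, IsProper (baton k l) c := by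
  choose g hg using ht
  let cell : (ι → ℝ) → ι → ZMod (k + 1) := fun x a => (⌊x a / l⌋ : ℤ)
  refine ⟨fun x => g (cell x), ?_⟩
  rintro s ⟨f, hf, hfs⟩
  have hmem : ∀ j ≤ k, (j : ℝ) * l ∈ baton k l := fun j hj => ⟨j, hj, rfl⟩
  obtain ⟨c, ε, hc⟩ := exists_coord_eq_add_mul hk hl (y := fun j => f (j * l))
    fun i hi j hj => by
      rw [hf _ (hmem i hi) _ (hmem j hj), Real.dist_eq, ← sub_mul, abs_mul, abs_of_pos hl]
  obtain ⟨j, hj, hjt⟩ := exists_floor_div_eq_zmod hl.ne' (f ((0 : ℕ) * l) c) ε (t s c)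
  have hcolour : g (cell (f (j * l))) = s := hfs (mem_image_of_mem f (hmem j hj))
  apply hg (cell (f (j * l))) c
  rw [hcolour, ← hjt, ← hc j hj]

theorem exists_isProper_gridAP {m : ℕ} (hk : 0 < k) {lam : Fin m → ℝ} {i : Fin m}
    (hi : 0 < lam i) (n : ℕ) :
    ∃ N : ℕ, (N : ℝ) ≤ (((k : ℝ) + 1) / k) ^ n * (Real.log (k + 1) * n + 1) ∧
      ∃ c : (Fin n → ℝ) → Fin N, IsProper (gridAP m k lam) c := by
  obtain ⟨N, hN, t, ht⟩ := exists_avoiding_family (ι := Fin n) hk (ZMod.card (k + 1))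
  obtain ⟨c, hc⟩ := exists_isProper_baton hk hi ht
  exact ⟨N, by simpa using hN, c, hc.of_hasCopy (hasCopy_baton_gridAP k lam i)⟩

theorem chrom_gridAP_le {m : ℕ} (hk : 0 < k) {lam : Fin m → ℝ} {i : Fin m} (hi : 0 < lam i)
    (n : ℕ) :
    (chrom (gridAP m k lam) n : ℝ) ≤
      (((k : ℝ) + 1) / k) ^ n * (Real.log (k + 1) * n + 1) := by
  obtain ⟨N, hN, c, hc⟩ := exists_isProper_gridAP hk hi n
  exact le_trans (mod_cast chrom_le_of_isProper hc) hN

end Upper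

section Slices

variable {α E : Type*} {n : ℕ}

/-- The section `{y | (a, y) ∈ A}` of a set `A ⊆ E ^ (n + 1)` over a first coordinate `a`. -/
def slice (a : E) (A : Set (Fin (n + 1) → E)) : Set (Fin n → E) :=
  {y | (Fin.cons a y : Fin (n + 1) → E) ∈ A}

variable [MetricSpace α] [MetricSpace E] {M : Set α} {A : Set (Fin (n + 1) → E)}

theorem dist_fin_cons (a b : E) (x y : Fin n → E) :
    dist (Fin.cons a x : Fin (n + 1) → E) (Fin.cons b y) = max (dist a b) (dist x y) := by
  apply le_antisymm
  · rw [dist_pi_le_iff (by positivity), Fin.forall_fin_succ]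
    exact ⟨le_max_left _ _, fun c => (dist_le_pi_dist x y c).trans (le_max_right _ _)⟩
  · refine max_le (dist_le_pi_dist (Fin.cons a x : Fin (n + 1) → E) (Fin.cons b y) 0) ?_
    rw [dist_pi_le_iff dist_nonneg]
    exact fun c => dist_le_pi_dist (Fin.cons a x : Fin (n + 1) → E) (Fin.cons b y) c.succ

/-- Lifting each point of the copy to either of the two slices changes no distance, as the first
coordinates differ by at most `l`. -/
theorem HasCopy.of_slice_union {l : ℝ} {a b : E} (hM : M.Pairwise fun x y => l ≤ dist x y)
    (hab : dist a b ≤ l) (h : HasCopy M (slice a A ∪ slice b A)) : HasCopy M A := by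
  obtain ⟨f, hf, hfA⟩ := h
  have hlift : ∀ x, ∃ e : E, (e = a ∨ e = b) ∧ (x ∈ M → f x ∈ slice e A) := by
    intro x
    by_cases hx : x ∈ M
    · rcases hfA (mem_image_of_mem f hx) with ha | hb
      · exact ⟨a, .inl rfl, fun _ => ha⟩
      · exact ⟨b, .inr rfl, fun _ => hb⟩
    · exact ⟨a, .inl rfl, fun h => absurd h hx⟩
  choose e he hfe using hlift
  refine ⟨fun x => Fin.cons (e x) (f x), fun x hx y hy => ?_, ?_⟩
  · rw [dist_fin_cons, hf x hx y hy]
    obtain rfl | hxy := eq_or_ne x y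
    · simp
    · refine max_eq_right (le_trans ?_ (hM hx hy hxy))
      have hl : 0 ≤ l := dist_nonneg.trans hab
      rcases he x with h | h <;> rcases he y with h' | h' <;> simpa [h, h', dist_comm b a]
  · rintro _ ⟨x, hx, rfl⟩
    exact hfe x hx

theorem HasCopy.prod_of_iInter_slice {β : Type*} [MetricSpace β] {T : Set β} {g : β → E}
    (hg : ∀ s ∈ T, ∀ t ∈ T, dist (g s) (g t) = dist s t)
    (h : HasCopy M (⋂ t ∈ T, slice (g t) A)) : HasCopy (T ×ˢ M) A := by
  obtain ⟨f, hf, hfA⟩ := h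
  refine ⟨fun p => Fin.cons (g p.1) (f p.2), ?_, ?_⟩
  · rintro ⟨s, x⟩ ⟨hs, hx⟩ ⟨t, y⟩ ⟨ht, hy⟩
    rw [dist_fin_cons, hg s hs t ht, hf x hx y hy, Prod.dist_eq]
  · rintro _ ⟨⟨t, x⟩, ⟨ht, hx⟩, rfl⟩
    exact mem_iInter₂.1 (hfA (mem_image_of_mem f hx)) t ht

theorem HasCopy.baton_prod_of_dissipate_slice {k : ℕ} {A : Set (Fin (n + 1) → ℝ)} {a l : ℝ}
    (h : HasCopy M (dissipate (fun t : ℕ => slice (a + t * l) A) k)) :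
    HasCopy (baton k l ×ˢ M) A := by
  refine HasCopy.prod_of_iInter_slice (g := (a + ·)) (fun s _ t _ => dist_add_left a s t)
    (h.mono ?_)
  refine subset_iInter₂ ?_
  rintro _ ⟨j, hj, rfl⟩
  exact dissipate_subset hj

theorem HasCopy.of_dissipate_slice_union {A : Set (Fin (n + 1) → ℝ)} {a l : ℝ} {j : ℕ}
    (hl : 0 ≤ l) (hM : M.Pairwise fun x y => l ≤ dist x y)
    (h : HasCopy M (dissipate (fun t : ℕ => slice (a + t * l) A) j ∪
      slice (a + (j + 1 : ℕ) * l) A)) : HasCopy M A := by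
  have hdist : dist (a + j * l) (a + (j + 1 : ℕ) * l) ≤ l := by
    rw [dist_add_left, Real.dist_eq, ← sub_mul, abs_mul, abs_of_nonneg hl]
    simp
  have hsub : dissipate (fun t : ℕ => slice (a + t * l) A) j ⊆ slice (a + j * l) A :=
    dissipate_subset le_rfl
  exact (h.mono (union_subset_union_left _ hsub)).of_slice_union hM hdist

end Slices

section Density

variable {Ω E : Type*} [Fintype Ω] (φ : Ω → E) {n : ℕ}

/-- The proportion of words `w ∈ Ω ^ n` whose image `φ ∘ w ∈ E ^ n` lies in `A`. Words are counted
with multiplicity, so that `φ` need not be injective. -/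
noncomputable def density (A : Set (Fin n → E)) : ℝ :=
  𝔼 w : Fin n → Ω, A.indicator 1 (φ ∘ w)

theorem density_empty : density φ (∅ : Set (Fin n → E)) = 0 := by
  simp [density]

theorem density_le_one [Nonempty Ω] (A : Set (Fin n → E)) : density φ A ≤ 1 :=
  Finset.expect_le Finset.univ_nonempty fun _ _ =>
    indicator_le_self' (fun _ _ => zero_le_one) _

theorem density_union_add_density_inter (A B : Set (Fin n → E)) :
    density φ (A ∪ B) + density φ (A ∩ B) = density φ A + density φ B := by
  simp only [density, ← Finset.expect_add_distrib]
  exact Finset.expect_congr rfl fun w _ => indicator_union_add_inter_apply 1 A B _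

theorem sum_density_fiber [Nonempty Ω] {κ : Type*} [Fintype κ] (c : (Fin n → E) → κ) :
    ∑ i, density φ {x | c x = i} = 1 := by
  classical
  simp [density, ← Finset.expect_sum_comm, indicator_apply]

theorem density_succ (A : Set (Fin (n + 1) → E)) :
    density φ A = 𝔼 ω, density φ (slice (φ ω) A) := by
  have hcons (ω : Ω) (w : Fin n → Ω) :
      φ ∘ (Fin.cons ω w : Fin (n + 1) → Ω) = Fin.cons (φ ω) (φ ∘ w) := by
    funext c
    cases c using Fin.cases <;> rfl
  simp only [density]
  rw [← Finset.expect_product', Finset.univ_product_univ]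
  refine (Fintype.expect_equiv (Fin.consEquiv fun _ => Ω) _ _ fun p => ?_).symm
  change (slice (φ p.1) A).indicator 1 (φ ∘ p.2) = A.indicator 1 (φ ∘ Fin.cons p.1 p.2)
  rw [hcons]
  rfl

theorem sum_range_succ_density (B : ℕ → Set (Fin n → E)) (j : ℕ) :
    ∑ t ∈ Finset.range (j + 1), density φ (B t) =
      ∑ t ∈ Finset.range j, density φ (dissipate B t ∪ B (t + 1)) + density φ (dissipate B j) := by
  induction j with
  | zero => simp [dissipate_zero_nat]
  | succ j ih =>
    rw [Finset.sum_range_succ, ih, Finset.sum_range_succ, dissipate_succ, add_assoc, add_assoc,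
      density_union_add_density_inter, add_comm (density φ (dissipate B j))]

/-- `M`-free sets in dimension `n` have density at most `r ^ n * (n + 1) ^ s`, for all `n`. -/
def HasDensityBound {α : Type*} [MetricSpace α] [MetricSpace E] (φ : Ω → E) (r : ℝ) (s : ℕ)
    (M : Set α) : Prop :=
  ∀ (n : ℕ) (A : Set (Fin n → E)), ¬ HasCopy M A → density φ A ≤ r ^ n * ((n : ℝ) + 1) ^ s

variable {α β κ : Type*} [MetricSpace α] [MetricSpace β] [MetricSpace E] {φ} {r : ℝ} {s : ℕ}
  {M : Set α} {M' : Set β}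

theorem HasDensityBound.of_hasCopy (h : HasDensityBound φ r s M) (hM : HasCopy M' M) :
    HasDensityBound φ r s M' :=
  fun n A hA => h n A fun hMA => hA (hM.trans hMA)

theorem HasDensityBound.of_subsingleton (hr : 0 ≤ r) (hM : M.Subsingleton) :
    HasDensityBound φ r s M := by
  intro n A hA
  obtain rfl : A = ∅ := not_nonempty_iff_eq_empty.1 fun hne => hA (.of_subsingleton hM hne)
  rw [density_empty]
  positivity

theorem HasDensityBound.one_le_card_mul [Nonempty Ω] [Fintype κ] (h : HasDensityBound φ r s M)
    {c : (Fin n → E) → κ} (hc : IsProper M c) :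
    1 ≤ Fintype.card κ * (r ^ n * ((n : ℝ) + 1) ^ s) := by
  calc (1 : ℝ) = ∑ i, density φ {x | c x = i} := (sum_density_fiber φ c).symm
    _ ≤ ∑ _i : κ, r ^ n * ((n : ℝ) + 1) ^ s := Finset.sum_le_sum fun i _ => h n _ (hc i)
    _ = Fintype.card κ * (r ^ n * ((n : ℝ) + 1) ^ s) := by
        rw [Finset.sum_const, Finset.card_univ, nsmul_eq_mul]

end Density

section Lower

variable {ι : Type*} [Fintype ι] (k : ℕ) (lam : ι → ℝ)

/-- The value `∑ i, q i * lam i` of a letter `q`. Letters are the points of the abstract grid, so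
that moving one coordinate of a letter moves its value along a translate of `baton k (lam i)`. -/
noncomputable def gridSum (q : ι → Fin (k + 1)) : ℝ :=
  ∑ i, (q i : ℝ) * lam i

/-- The face of the grid `∏ i, B_k(lam i)` in which the coordinates outside `J` vanish. -/
def gridFace (J : Finset ι) : Set (ι → ℝ) :=
  {x | (∀ i ∈ J, x i ∈ baton k (lam i)) ∧ ∀ i ∉ J, x i = 0}

variable {k lam}

theorem pairwise_le_dist_gridFace {J : Finset ι} {l : ℝ} (hl : ∀ i ∈ J, l ≤ lam i) :
    (gridFace k lam J).Pairwise fun x y => l ≤ dist x y := by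
  intro x hx y hy hxy
  obtain ⟨i, hi⟩ := Function.ne_iff.1 hxy
  have hiJ : i ∈ J := by
    by_contra hiJ
    exact hi ((hx.2 i hiJ).trans (hy.2 i hiJ).symm)
  calc l ≤ lam i := hl i hiJ
    _ ≤ dist (x i) (y i) := pairwise_le_dist_baton k (lam i) (hx.1 i hiJ) (hy.1 i hiJ) hi
    _ ≤ dist x y := dist_le_pi_dist x y i

variable [DecidableEq ι]

theorem expect_gridSum_le (i : ι) {f : ℝ → ℝ} {b : ℝ}
    (hf : ∀ a, 𝔼 t : Fin (k + 1), f (a + t * lam i) ≤ b) :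
    𝔼 q, f (gridSum k lam q) ≤ b := by
  let e := Equiv.funSplitAt i (Fin (k + 1))
  have hsplit (t : Fin (k + 1)) (q : {j // j ≠ i} → Fin (k + 1)) :
      gridSum k lam (e.symm (t, q)) = ∑ j, (q j : ℝ) * lam j + t * lam i := by
    rw [gridSum, Fintype.sum_eq_add_sum_subtype_ne _ i, add_comm]
    congr 1
    · exact Finset.sum_congr rfl fun j _ => by simp [e, j.2]
    · simp [e]
  calc 𝔼 q, f (gridSum k lam q)
      = 𝔼 p : Fin (k + 1) × ({j // j ≠ i} → Fin (k + 1)), f (gridSum k lam (e.symm p)) :=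
        (Fintype.expect_equiv e.symm _ _ fun _ => rfl).symm
    _ = 𝔼 q : {j // j ≠ i} → Fin (k + 1), 𝔼 t : Fin (k + 1),
          f (∑ j, (q j : ℝ) * lam j + t * lam i) := by
        rw [← Finset.univ_product_univ, Finset.expect_product, Finset.expect_comm]
        simp only [hsplit]
    _ ≤ b := Finset.expect_le Finset.univ_nonempty fun q _ => hf _

/-- Telescope the slices `B t` along a line in direction `i` into the sets
`B 0 ∩ ⋯ ∩ B j ∪ B (j + 1)`, which are free of `baton k (lam i) ×ˢ M`, and the full intersection,
which is free of `M`. -/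
theorem HasDensityBound.baton_prod {α : Type*} [MetricSpace α] {M : Set α} {s : ℕ} {i : ι}
    (hk : 0 < k) (hi : 0 ≤ lam i) (hM : M.Pairwise fun x y => lam i ≤ dist x y)
    (h : HasDensityBound (gridSum k lam) (k / (k + 1)) s M) :
    HasDensityBound (gridSum k lam) (k / (k + 1)) (s + 1) (baton k (lam i) ×ˢ M) := by
  set r : ℝ := k / (k + 1) with hr
  have hk' : (1 : ℝ) ≤ k := mod_cast hk
  have hsep := pairwise_le_dist_prod (pairwise_le_dist_baton k _) hM
  intro n
  induction n with
  | zero => exact fun A _ => by simpa using density_le_one _ A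
  | succ n ih =>
    intro A hA
    rw [density_succ]
    refine expect_gridSum_le i (f := fun x => density (gridSum k lam) (slice x A)) fun a => ?_
    let B : ℕ → Set (Fin n → ℝ) := fun t => slice (a + t * lam i) A
    have hunion : ∀ j, density (gridSum k lam) (dissipate B j ∪ B (j + 1)) ≤
        r ^ n * ((n : ℝ) + 1) ^ (s + 1) :=
      fun j => ih _ fun hcopy => hA (hcopy.of_dissipate_slice_union hi hsep)
    have hinter : density (gridSum k lam) (dissipate B k) ≤ r ^ n * ((n : ℝ) + 1) ^ s :=
      h n _ fun hcopy => hA hcopy.baton_prod_of_dissipate_slice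
    calc 𝔼 t : Fin (k + 1), density (gridSum k lam) (B t)
        = (∑ t ∈ Finset.range k, density (gridSum k lam) (dissipate B t ∪ B (t + 1)) +
            density (gridSum k lam) (dissipate B k)) / (k + 1) := by
          rw [Fintype.expect_eq_sum_div_card,
            Fin.sum_univ_eq_sum_range (fun t => density (gridSum k lam) (B t)),
            sum_range_succ_density, Fintype.card_fin, Nat.cast_add_one]
      _ ≤ (k * (r ^ n * ((n : ℝ) + 1) ^ (s + 1)) + k * (r ^ n * ((n : ℝ) + 1) ^ s)) / (k + 1) := by
          gcongr
          · simpa using Finset.sum_le_card_nsmul (Finset.range k) _ _ fun j _ => hunion j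
          · exact hinter.trans (le_mul_of_one_le_left (by positivity) hk')
      _ = r ^ (n + 1) * (((n : ℝ) + 1) ^ s * (n + 1 + 1)) := by
          rw [pow_succ r, hr]
          ring
      _ ≤ r ^ (n + 1) * (((n : ℝ) + 1 + 1) ^ s * (n + 1 + 1)) := by
          gcongr
          linarith
      _ = r ^ (n + 1) * (((n + 1 : ℕ) : ℝ) + 1) ^ (s + 1) := by
          push_cast
          ring

theorem dist_pi_eq_max_update (i : ι) (a : ℝ) (x y : ι → ℝ) :
    dist x y =
      max (dist (x i) (y i)) (dist (Function.update x i a) (Function.update y i a)) := by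
  apply le_antisymm
  · rw [dist_pi_le_iff (by positivity)]
    intro c
    obtain rfl | hc := eq_or_ne c i
    · exact le_max_left _ _
    · refine le_max_of_le_right ?_
      simpa [hc] using dist_le_pi_dist (Function.update x i a) (Function.update y i a) c
  · refine max_le (dist_le_pi_dist x y i) ((dist_pi_le_iff dist_nonneg).2 fun c => ?_)
    obtain rfl | hc := eq_or_ne c i
    · simp
    · simpa [hc] using dist_le_pi_dist x y c

theorem hasCopy_gridFace_insert {J : Finset ι} {i : ι} (hi : i ∉ J) :
    HasCopy (gridFace k lam (insert i J)) (baton k (lam i) ×ˢ gridFace k lam J) := by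
  refine ⟨fun x => (x i, Function.update x i 0), fun x _ y _ => ?_, ?_⟩
  · exact (dist_pi_eq_max_update i 0 x y).symm
  · rintro _ ⟨x, ⟨hx, hx0⟩, rfl⟩
    refine ⟨hx i (Finset.mem_insert_self i J), fun j hj => ?_, fun j hj => ?_⟩
    · simpa [ne_of_mem_of_not_mem hj hi] using hx j (Finset.mem_insert_of_mem hj)
    · obtain rfl | hji := eq_or_ne j i
      · simp
      · simpa [hji] using hx0 j (by simp [hj, hji])

theorem hasDensityBound_gridFace (hk : 0 < k) (hlam : ∀ i, 0 ≤ lam i) (J : Finset ι) :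
    HasDensityBound (gridSum k lam) (k / (k + 1)) #J (gridFace k lam J) := by
  induction J using Finset.induction_on_min_value lam with
  | empty =>
    refine .of_subsingleton (by positivity) fun x hx y hy => funext fun i => ?_
    rw [hx.2 i (Finset.notMem_empty i), hy.2 i (Finset.notMem_empty i)]
  | insert i J hi hmin ih =>
    rw [Finset.card_insert_of_notMem hi]
    exact (ih.baton_prod hk (hlam i) (pairwise_le_dist_gridFace hmin)).of_hasCopy
      (hasCopy_gridFace_insert hi)

theorem gridFace_univ (m k : ℕ) (lam : Fin m → ℝ) :
    gridFace k lam Finset.univ = gridAP m k lam := by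
  ext x
  simp [gridFace, gridAP, baton]

theorem le_chrom_gridAP {m : ℕ} (hk : 0 < k) {lam : Fin m → ℝ} (hlam : ∀ i, 0 ≤ lam i)
    {i : Fin m} (hi : 0 < lam i) (n : ℕ) :
    (((k : ℝ) + 1) / k) ^ n * (((n : ℝ) + 1) ^ m)⁻¹ ≤ chrom (gridAP m k lam) n := by
  obtain ⟨N, -, c, hc⟩ := exists_isProper_gridAP hk hi n
  obtain ⟨c', hc'⟩ := hc.exists_isProper_chrom
  have hbound := hasDensityBound_gridFace hk hlam Finset.univ
  rw [gridFace_univ] at hbound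
  have hcard := hbound.one_le_card_mul hc'
  rw [Fintype.card_fin, Finset.card_univ, Fintype.card_fin] at hcard
  rw [← inv_div, inv_pow, ← mul_inv, inv_le_iff_one_le_mul₀ (by positivity)]
  exact hcard

end Lower

section Limits

theorem tendsto_mul_add_one_rpow_one_div {a : ℝ} (ha : 0 < a) :
    Tendsto (fun n : ℕ => (a * n + 1) ^ (1 / (n : ℝ))) atTop (nhds 1) := by
  have hatTop : Tendsto (fun n : ℕ => a * (n : ℝ) + 1) atTop atTop :=
    tendsto_atTop_add_const_right _ _ (tendsto_natCast_atTop_atTop.const_mul_atTop ha)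
  refine ((tendsto_rpow_div_mul_add 1 a⁻¹ (-a⁻¹) (by positivity)).comp hatTop).congr fun n => ?_
  rw [Function.comp_apply, mul_add, inv_mul_cancel_left₀ ha.ne', mul_one, add_neg_cancel_right]

theorem tendsto_inv_add_one_pow_rpow_one_div (m : ℕ) :
    Tendsto (fun n : ℕ => (((n : ℝ) + 1) ^ m)⁻¹ ^ (1 / (n : ℝ))) atTop (nhds 1) := by
  have hroot := ((tendsto_mul_add_one_rpow_one_div one_pos).pow m).inv₀ (by simp)
  rw [one_pow, inv_one] at hroot
  refine hroot.congr fun n => ?_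
  rw [one_mul, Real.rpow_pow_comm (by positivity), Real.inv_rpow (by positivity)]

theorem tendsto_pow_mul_rpow_one_div {C : ℝ} (hC : 0 ≤ C) {g : ℕ → ℝ} (hg₀ : ∀ n, 0 ≤ g n)
    (hg : Tendsto (fun n : ℕ => g n ^ (1 / (n : ℝ))) atTop (nhds 1)) :
    Tendsto (fun n : ℕ => (C ^ n * g n) ^ (1 / (n : ℝ))) atTop (nhds C) := by
  have hmul := hg.const_mul C
  rw [mul_one] at hmul
  refine hmul.congr' ?_
  filter_upwards [eventually_ne_atTop 0] with n hn
  rw [Real.mul_rpow (by positivity) (hg₀ n), one_div, Real.pow_rpow_inv_natCast hC hn]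

end Limits

/-- For positive reals `λ₁,…,λ_m`,
`χ(ℝ^n_∞, B_k(λ₁) × ⋯ × B_k(λ_m))^(1/n) → (k+1)/k` as `n → ∞`. -/
theorem chi_grid (k m : ℕ) (hk : 0 < k) (hm : 0 < m)
    (lam : Fin m → ℝ) (hlam : ∀ i, 0 < lam i) :
    Tendsto (fun n : ℕ => (chrom (gridAP m k lam) n : ℝ) ^ (1 / (n : ℝ)))
      atTop (nhds (((k : ℝ) + 1) / k)) := by
  have hlog : 0 < Real.log ((k : ℝ) + 1) := Real.log_pos (lt_add_of_pos_left _ (mod_cast hk))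
  have hpos := hlam ⟨0, hm⟩
  refine tendsto_of_tendsto_of_tendsto_of_le_of_le
    (tendsto_pow_mul_rpow_one_div (by positivity) (fun n => by positivity)
      (tendsto_inv_add_one_pow_rpow_one_div m))
    (tendsto_pow_mul_rpow_one_div (by positivity) (fun n => by positivity)
      (tendsto_mul_add_one_rpow_one_div hlog)) (fun n => ?_) (fun n => ?_)
  · exact Real.rpow_le_rpow (by positivity)
      (le_chrom_gridAP hk (fun i => (hlam i).le) hpos n) (by positivity)
  · exact Real.rpow_le_rpow (by positivity) (chrom_gridAP_le hk hpos n) (by positivity)
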